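/- Define f(z) = exp(z) − z − 1 and, for x, v, s, z with x + 2v + s > 0 and z > 0, define Ψ_A(x, v, s, z) = −1 − x/(x+2v+s) + v²·z⁴·exp(z)/((x+2v+s)²·f(z)²) − x·v·z²·exp(z)/((x+2v+s)²·f(z)). For ε > 0 let β(ε) be the unique β > e^{−1} with 1 − β − (1/(2e))·(log β)² = 1 − 3/(2e) − ε, and set z_ε = e·β(ε) + log β(ε), x_ε = e^{−1}·z_ε² − z_ε·β(ε)·(1 − exp(−z_ε)), v_ε = β(ε)·exp(−z_ε)·(exp(z_ε) − z_ε − 1), s_ε = β(ε)·(z_ε + z_ε·exp(−z_ε) + 2·exp(−z_ε) − 2). Then the partial derivative of Ψ_A with respect to its first variable x, evaluated at (x_ε, v_ε, s_ε, z_ε), equals −ε^{−1} + O(ε^{−1/2}) as ε → 0+. -/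

import Mathlib

open Real Filter Set Topology Asymptotics

noncomputable def fKS (z : ℝ) : ℝ := Real.exp z - z - 1

/-- The drift function `Φ_A` of the leaf count, written with `z` as a separate
(fourth) variable. -/
noncomputable def PsiA (x v s z : ℝ) : ℝ :=
  -1 - x / (x + 2 * v + s)
    + v ^ 2 * z ^ 4 * Real.exp z / ((x + 2 * v + s) ^ 2 * (fKS z) ^ 2)
    - x * v * z ^ 2 * Real.exp z / ((x + 2 * v + s) ^ 2 * fKS z)

noncomputable def zOf (β : ℝ) : ℝ := Real.exp 1 * β + Real.log β

noncomputable def XFluid (β : ℝ) : ℝ :=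
  (Real.exp 1)⁻¹ * (zOf β) ^ 2 - zOf β * β * (1 - Real.exp (-(zOf β)))

noncomputable def VFluid (β : ℝ) : ℝ :=
  β * Real.exp (-(zOf β)) * (Real.exp (zOf β) - zOf β - 1)

noncomputable def SFluid (β : ℝ) : ℝ :=
  β * (zOf β + zOf β * Real.exp (-(zOf β)) + 2 * Real.exp (-(zOf β)) - 2)

/-!
In the coordinate `u = 1 + log β`, which vanishes at extinction, `e β = exp u`,
`z = exp u + u - 1 = 2 u + O(u²)` and `e ε = exp u - 1 - u + u² / 2 = u² + O(u³)`. Along the fluid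
limit the total degree is `x + 2 v + s = z² / e`, and the derivative collapses to `e / z²` times a
polynomial in `exp u`, `exp (-z)` and `(1 - exp (-z)) / z`. All three tend to `1` at rate `O(u)`,
and there the polynomial takes the value `1 - 2 - 3 = -4`. So the derivative is
`-e / u² + O(1 / u)`, which is `-1 / ε + O(1 / √ε)`.
-/

section ReciprocalExpansion

variable {α 𝕜 : Type*} [NormedField 𝕜] {l : Filter α}

theorem inv_sub_inv_isBigO {f g h : α → 𝕜} (hfg : (f - g) =O[l] (h * g))
    (hh : Tendsto h l (𝓝 0)) : (f⁻¹ - g⁻¹) =O[l] (h * g⁻¹) := by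
  have hequiv : f ~[l] g := by
    have hsmall : (h * g) =o[l] g := by
      simpa [Pi.mul_def] using ((isLittleO_one_iff 𝕜).2 hh).mul_isBigO (isBigO_refl g l)
    exact hfg.trans_isLittleO hsmall
  refine ((hfg.neg_left.mul hequiv.inv.isBigO).mul (isBigO_refl g⁻¹ l)).congr' ?_ ?_
  · filter_upwards [hequiv.isTheta.eq_zero_iff] with a hzero
    simp only [Pi.sub_apply, Pi.inv_apply]
    by_cases hg : g a = 0
    · simp [hg, hzero.2 hg]
    · rw [inv_sub_inv' (mt hzero.1 hg) hg]
      ring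
  · refine .of_forall fun a => ?_
    by_cases hg : g a = 0 <;> simp [hg]

theorem inv_sub_inv_const_mul_pow_isBigO {f u : α → 𝕜} {c : 𝕜} {n : ℕ} (hc : c ≠ 0)
    (hf : (fun a => f a - c * u a ^ n) =O[l] fun a => u a ^ (n + 1)) (hu : Tendsto u l (𝓝 0)) :
    (fun a => (f a)⁻¹ - (c * u a ^ n)⁻¹) =O[l] fun a => u a / u a ^ n := by
  have hrel : (f - fun a => c * u a ^ n) =O[l] (u * fun a => c * u a ^ n) :=
    hf.trans <| (isBigO_self_const_mul hc _ _).congr_right fun a => by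
      rw [Pi.mul_apply]
      ring
  refine (inv_sub_inv_isBigO hrel hu).trans
    (((isBigO_refl (fun a => u a / u a ^ n) l).const_mul_left c⁻¹).congr_left fun a => ?_)
  rw [Pi.mul_apply, Pi.inv_apply, mul_inv, div_eq_mul_inv, mul_left_comm]

end ReciprocalExpansion

theorem exp_sub_one_isBigO : (fun x : ℝ => exp x - 1) =O[𝓝 0] fun x => x := by
  simpa using exp_sub_sum_range_isBigO_pow 1

theorem exp_sub_one_sub_isBigO : (fun x : ℝ => exp x - 1 - x) =O[𝓝 0] fun x => x ^ 2 := by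
  simpa [Finset.sum_range_succ, sub_sub] using exp_sub_sum_range_isBigO_pow 2

theorem exp_sub_quadratic_isBigO :
    (fun x : ℝ => exp x - 1 - x - x ^ 2 / 2) =O[𝓝 0] fun x => x ^ 3 := by
  simpa [Finset.sum_range_succ, sub_sub] using exp_sub_sum_range_isBigO_pow 3

theorem one_sub_exp_neg_div_sub_one_isBigO :
    (fun x : ℝ => (1 - exp (-x)) / x - 1) =O[𝓝[≠] 0] fun x => x := by
  have hneg : Tendsto (fun x : ℝ => -x) (𝓝[≠] 0) (𝓝 0) :=
    (continuous_neg.tendsto' 0 0 neg_zero).mono_left nhdsWithin_le_nhds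
  have hdiv := (exp_sub_one_sub_isBigO.comp_tendsto hneg).neg_left.mul
    (isBigO_refl (fun x : ℝ => x⁻¹) _)
  refine hdiv.congr' ?_ (.of_forall fun x => ?_)
  · filter_upwards [self_mem_nhdsWithin] with x (hx : x ≠ 0)
    simp only [Function.comp_apply]
    field_simp
    ring
  · simp only [Function.comp_apply, sq, neg_mul_neg, mul_self_mul_inv]

theorem fKS_pos {z : ℝ} (hz : z ≠ 0) : 0 < fKS z := by
  have := add_one_lt_exp hz
  unfold fKS
  linarith

theorem hasDerivAt_PsiA {x v s z : ℝ} (hN : x + 2 * v + s ≠ 0) :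
    HasDerivAt (fun x => PsiA x v s z)
      (-(2 * v + s) / (x + 2 * v + s) ^ 2
        - v * z ^ 2 / fKS z * exp z * (2 * v + s - x + 2 * (v * z ^ 2 / fKS z))
          / (x + 2 * v + s) ^ 3) x := by
  set w := v * z ^ 2 / fKS z with hw
  have hPsi : (fun x => PsiA x v s z) = fun x =>
      -1 - x / (x + 2 * v + s) + (w ^ 2 * exp z - x * (w * exp z)) / (x + 2 * v + s) ^ 2 := by
    funext x
    rw [PsiA, hw]
    generalize x + 2 * v + s = N
    ring
  have hdenom : HasDerivAt (fun x => x + 2 * v + s) 1 x :=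
    ((hasDerivAt_id x).add_const (2 * v)).add_const s
  have hnum : HasDerivAt (fun x => w ^ 2 * exp z - x * (w * exp z)) (-(1 * (w * exp z))) x :=
    ((hasDerivAt_id x).mul_const (w * exp z)).const_sub _
  rw [hPsi]
  refine ((((hasDerivAt_id x).div hdenom hN).const_sub (-1)).add
    (hnum.div (hdenom.pow 2) (pow_ne_zero 2 hN))).congr_deriv ?_
  simp only [id_eq, Pi.pow_apply]
  field_simp
  ring

theorem VFluid_eq_mul_fKS (β : ℝ) : VFluid β = β * exp (-zOf β) * fKS (zOf β) := rfl

theorem XFluid_add_two_mul_VFluid_add_SFluid (β : ℝ) :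
    XFluid β + 2 * VFluid β + SFluid β = zOf β ^ 2 / exp 1 := by
  have hexp : exp (-zOf β) * exp (zOf β) = 1 := by rw [← exp_add, neg_add_cancel, exp_zero]
  unfold XFluid VFluid SFluid
  linear_combination 2 * β * hexp

/-- The derivative of the leaf drift along the fluid limit, divided by `e / z²`, as a function of
`b = e β` and `z`. -/
noncomputable def restoringFactor (b z : ℝ) : ℝ :=
  b - 2 * b ^ 2 * exp (-z) - (b + 2 * b ^ 2) * ((1 - exp (-z)) / z)

theorem deriv_PsiA_fluid {β : ℝ} (hz : zOf β ≠ 0) :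
    deriv (fun x => PsiA x (VFluid β) (SFluid β) (zOf β)) (XFluid β)
      = exp 1 * (zOf β ^ 2)⁻¹ * restoringFactor (exp 1 * β) (zOf β) := by
  have htotal := XFluid_add_two_mul_VFluid_add_SFluid β
  have hN : XFluid β + 2 * VFluid β + SFluid β ≠ 0 := by rw [htotal]; positivity
  have hw : VFluid β * zOf β ^ 2 / fKS (zOf β) = β * exp (-zOf β) * zOf β ^ 2 := by
    rw [VFluid_eq_mul_fKS, div_eq_iff (fKS_pos hz).ne']
    ring
  have hrest : 2 * VFluid β + SFluid β = zOf β ^ 2 / exp 1 - XFluid β := by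
    rw [← htotal]
    ring
  rw [(hasDerivAt_PsiA hN).deriv, htotal, hw, hrest]
  unfold XFluid restoringFactor
  rw [exp_neg]
  field_simp
  ring

/-- The time `ε = t(e⁻¹) - t(β)` before extinction at which the fluid limit has parameter `β`,
where `t(β) = 1 - β - (log β)² / (2 e)`. -/
noncomputable def timeToExtinction (β : ℝ) : ℝ :=
  β + 1 / (2 * exp 1) * log β ^ 2 - 3 / (2 * exp 1)

theorem exp_one_mul_exp_sub_one (u : ℝ) : exp 1 * exp (u - 1) = exp u := by
  rw [← exp_add, add_sub_cancel]

theorem exp_one_mul_timeToExtinction (u : ℝ) :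
    exp 1 * timeToExtinction (exp (u - 1)) = exp u - 1 - u + u ^ 2 / 2 := by
  rw [timeToExtinction, log_exp, ← exp_one_mul_exp_sub_one u]
  field_simp
  ring

theorem zOf_exp_sub_one (u : ℝ) : zOf (exp (u - 1)) = exp u + u - 1 := by
  rw [zOf, log_exp, exp_one_mul_exp_sub_one, add_sub_assoc]

theorem zOf_exp_sub_one_sub_two_mul_isBigO :
    (fun u => zOf (exp (u - 1)) - 2 * u) =O[𝓝 0] fun u => u ^ 2 :=
  exp_sub_one_sub_isBigO.congr_left fun u => by rw [zOf_exp_sub_one]; ring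

theorem zOf_exp_sub_one_isEquivalent : (fun u => zOf (exp (u - 1))) ~[𝓝 0] fun u => 2 * u := by
  have hsq : (fun u : ℝ => u ^ 2) =o[𝓝 0] fun u => u := by
    simpa using isLittleO_pow_pow (𝕜 := ℝ) one_lt_two
  exact zOf_exp_sub_one_sub_two_mul_isBigO.trans_isLittleO
    (hsq.trans_isBigO (isBigO_self_const_mul two_ne_zero _ _))

theorem zOf_exp_sub_one_isBigO : (fun u => zOf (exp (u - 1))) =O[𝓝 0] fun u => u :=
  zOf_exp_sub_one_isEquivalent.isBigO.trans (isBigO_const_mul_self 2 _ _)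

theorem tendsto_zOf_exp_sub_one : Tendsto (fun u => zOf (exp (u - 1))) (𝓝[≠] 0) (𝓝[≠] 0) := by
  refine tendsto_nhdsWithin_iff.2 ⟨?_, ?_⟩
  · exact (zOf_exp_sub_one_isBigO.trans_tendsto tendsto_id).mono_left nhdsWithin_le_nhds
  · have heq_zero_iff := zOf_exp_sub_one_isEquivalent.isTheta.eq_zero_iff
    filter_upwards [heq_zero_iff.filter_mono nhdsWithin_le_nhds, self_mem_nhdsWithin]
      with u hzero (hu : u ≠ 0)
    exact mt hzero.1 (mul_ne_zero two_ne_zero hu)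

theorem inv_sq_zOf_exp_sub_one_isBigO :
    (fun u => (zOf (exp (u - 1)) ^ 2)⁻¹) =O[𝓝 0] fun u => (u ^ 2)⁻¹ := by
  refine (zOf_exp_sub_one_isEquivalent.pow 2).inv.isBigO.trans ?_
  refine ((isBigO_refl (fun u : ℝ => (u ^ 2)⁻¹) _).const_mul_left (2 ^ 2)⁻¹).congr_left fun u => ?_
  rw [Pi.inv_apply, Pi.pow_apply, mul_pow, mul_inv]

theorem inv_sq_zOf_exp_sub_one_sub_isBigO :
    (fun u => (zOf (exp (u - 1)) ^ 2)⁻¹ - (4 * u ^ 2)⁻¹) =O[𝓝 0] fun u => u⁻¹ := by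
  have hsum : (fun u => zOf (exp (u - 1)) + 2 * u) =O[𝓝 0] fun u => u :=
    zOf_exp_sub_one_isBigO.add (isBigO_const_mul_self 2 _ _)
  have hsq : (fun u => zOf (exp (u - 1)) ^ 2 - 4 * u ^ 2) =O[𝓝 0] fun u => u ^ 3 :=
    (zOf_exp_sub_one_sub_two_mul_isBigO.mul hsum).congr (fun u => by ring) fun u => by ring
  simpa only [sq, div_self_mul_self'] using
    inv_sub_inv_const_mul_pow_isBigO four_ne_zero hsq tendsto_id

theorem exp_one_mul_timeToExtinction_sub_sq_isBigO :
    (fun u => exp 1 * timeToExtinction (exp (u - 1)) - u ^ 2) =O[𝓝 0] fun u => u ^ 3 :=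
  exp_sub_quadratic_isBigO.congr_left fun u => by rw [exp_one_mul_timeToExtinction]; ring

theorem inv_exp_one_mul_timeToExtinction_sub_isBigO :
    (fun u => (exp 1 * timeToExtinction (exp (u - 1)))⁻¹ - (u ^ 2)⁻¹) =O[𝓝 0] fun u => u⁻¹ := by
  have hsq : (fun u => exp 1 * timeToExtinction (exp (u - 1)) - 1 * u ^ 2)
      =O[𝓝 0] fun u => u ^ 3 := by
    simpa only [one_mul] using exp_one_mul_timeToExtinction_sub_sq_isBigO
  simpa only [one_mul, sq, div_self_mul_self'] using
    inv_sub_inv_const_mul_pow_isBigO one_ne_zero hsq tendsto_id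

theorem sqrt_timeToExtinction_isBigO :
    (fun u => √(timeToExtinction (exp (u - 1)))) =O[𝓝 0] fun u => u := by
  have hcube : (fun u : ℝ => u ^ 3) =O[𝓝 0] fun u => u ^ 2 :=
    (isLittleO_pow_pow (by norm_num)).isBigO
  have htime : (fun u => timeToExtinction (exp (u - 1))) =O[𝓝 0] fun u => u ^ 2 := by
    have hscaled :=
      (exp_one_mul_timeToExtinction_sub_sq_isBigO.trans hcube).add (isBigO_refl (fun u => u ^ 2) _)
    simp only [sub_add_cancel] at hscaled
    exact (isBigO_self_const_mul (exp_ne_zero 1) _ _).trans hscaled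
  have hsqrt := htime.sqrt (.of_forall sq_nonneg)
  simp only [sqrt_sq_eq_abs] at hsqrt
  exact hsqrt.trans (isBigO_abs_left.2 (isBigO_refl _ _))

theorem restoringFactor_add_four_isBigO :
    (fun u => restoringFactor (exp u) (zOf (exp (u - 1))) + 4) =O[𝓝[≠] 0] fun u => u := by
  have hz := tendsto_zOf_exp_sub_one
  have hz0 := hz.mono_right nhdsWithin_le_nhds
  have hzu := zOf_exp_sub_one_isBigO.mono (nhdsWithin_le_nhds (s := {0}ᶜ))
  have hb : (fun u : ℝ => exp u - 1) =O[𝓝[≠] 0] fun u => u :=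
    exp_sub_one_isBigO.mono nhdsWithin_le_nhds
  have hq : (fun u => exp (-zOf (exp (u - 1))) - 1) =O[𝓝[≠] 0] fun u => u :=
    (exp_sub_one_isBigO.comp_tendsto (by simpa using hz0.neg)).trans hzu.neg_left
  have hr : (fun u => (1 - exp (-zOf (exp (u - 1)))) / zOf (exp (u - 1)) - 1)
      =O[𝓝[≠] 0] fun u => u :=
    (one_sub_exp_neg_div_sub_one_isBigO.comp_tendsto hz).trans hzu
  have hmul {c g : ℝ → ℝ} (hc : Continuous c) (hg : g =O[𝓝[≠] 0] fun u => u) :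
      (fun u => c u * g u) =O[𝓝[≠] 0] fun u => u := by
    simpa using (((hc.tendsto 0).mono_left nhdsWithin_le_nhds).isBigO_one ℝ).mul hg
  refine (((hmul (c := fun u => -2 * exp u ^ 2) (by fun_prop) hq).add
    (hmul (c := fun u => -(exp u + 2 * exp u ^ 2)) (by fun_prop) hr)).add
    (hmul (c := fun u => -4 * (exp u + 1)) (by fun_prop) hb)).congr_left fun u => ?_
  rw [restoringFactor]
  ring

theorem deriv_PsiA_fluid_add_inv_isBigO :
    (fun u => deriv (fun x => PsiA x (VFluid (exp (u - 1))) (SFluid (exp (u - 1)))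
        (zOf (exp (u - 1)))) (XFluid (exp (u - 1))) + (timeToExtinction (exp (u - 1)))⁻¹)
      =O[𝓝[≠] 0] fun u => u⁻¹ := by
  have hfactor : (fun u => (zOf (exp (u - 1)) ^ 2)⁻¹ *
      (restoringFactor (exp u) (zOf (exp (u - 1))) + 4)) =O[𝓝[≠] 0] fun u => u⁻¹ :=
    ((inv_sq_zOf_exp_sub_one_isBigO.mono nhdsWithin_le_nhds).mul
      restoringFactor_add_four_isBigO).congr_right fun u => by
        rw [inv_mul_eq_div, sq, div_self_mul_self']
  have hz := inv_sq_zOf_exp_sub_one_sub_isBigO.const_mul_left (4 * exp 1)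
  have htime := inv_exp_one_mul_timeToExtinction_sub_isBigO.const_mul_left (exp 1)
  refine ((hfactor.const_mul_left (exp 1)).add
    ((htime.sub hz).mono nhdsWithin_le_nhds)).congr' ?_ .rfl
  filter_upwards [tendsto_zOf_exp_sub_one.eventually self_mem_nhdsWithin] with u hz
  rw [deriv_PsiA_fluid hz, exp_one_mul_exp_sub_one, mul_inv, mul_inv]
  field_simp
  ring

theorem abs_le_sqrt_timeToExtinction (u : ℝ) :
    |u| ≤ √(2 * exp 1 * timeToExtinction (exp (u - 1))) := by
  refine abs_le_sqrt ?_
  linarith [exp_one_mul_timeToExtinction u, add_one_le_exp u]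

theorem tendsto_nhdsNE_zero_of_timeToExtinction {α : Type*} {l : Filter α} {u : α → ℝ}
    (hu : Tendsto (fun a => timeToExtinction (exp (u a - 1))) l (𝓝[≠] 0)) :
    Tendsto u l (𝓝[≠] 0) := by
  refine tendsto_nhdsWithin_iff.2 ⟨?_, ?_⟩
  · refine squeeze_zero_norm (fun a => abs_le_sqrt_timeToExtinction (u a)) ?_
    simpa using ((hu.mono_right nhdsWithin_le_nhds).const_mul (2 * exp 1)).sqrt
  · filter_upwards [hu.eventually self_mem_nhdsWithin] with a ha hzero
    refine ha ?_
    simpa [show u a = 0 from hzero] using exp_one_mul_timeToExtinction (u a)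

theorem karpSipser_drift_restoring_force_general (B : ℝ → ℝ)
    (hB : ∀ᶠ ε : ℝ in 𝓝[>] 0,
      0 < B ε ∧
        1 - B ε - 1 / (2 * Real.exp 1) * (Real.log (B ε)) ^ 2
          = 1 - 3 / (2 * Real.exp 1) - ε) :
    (fun ε : ℝ =>
        deriv (fun x : ℝ => PsiA x (VFluid (B ε)) (SFluid (B ε)) (zOf (B ε)))
            (XFluid (B ε))
          + ε⁻¹)
      =O[𝓝[>] (0 : ℝ)] (fun ε : ℝ => (Real.sqrt ε)⁻¹) := by
  set u : ℝ → ℝ := fun ε => 1 + log (B ε)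
  have hexp : ∀ᶠ ε in 𝓝[>] 0, exp (u ε - 1) = B ε :=
    hB.mono fun ε h => by rw [add_sub_cancel_left, exp_log h.1]
  have htime : ∀ᶠ ε in 𝓝[>] 0, timeToExtinction (exp (u ε - 1)) = ε := by
    filter_upwards [hB, hexp] with ε h hε
    rw [hε, timeToExtinction]
    linarith [h.2]
  have hu : Tendsto u (𝓝[>] 0) (𝓝[≠] 0) := tendsto_nhdsNE_zero_of_timeToExtinction <|
    (tendsto_id.congr' (htime.mono fun _ h => h.symm)).mono_right (nhdsGT_le_nhdsNE 0)
  have hsqrt : (fun ε => √ε) =O[𝓝[>] 0] u :=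
    (sqrt_timeToExtinction_isBigO.comp_tendsto (hu.mono_right nhdsWithin_le_nhds)).congr'
      (htime.mono fun ε h => by rw [Function.comp_apply, h]) .rfl
  have hinv : (fun ε => (u ε)⁻¹) =O[𝓝[>] 0] fun ε => (√ε)⁻¹ := by
    refine hsqrt.inv_rev ?_
    filter_upwards [self_mem_nhdsWithin] with ε (hε : 0 < ε) h
    exact absurd h (sqrt_pos.2 hε).ne'
  refine ((deriv_PsiA_fluid_add_inv_isBigO.comp_tendsto hu).congr' ?_ .rfl).trans hinv
  filter_upwards [hexp, htime] with ε hε hε'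
  rw [Function.comp_apply, hε', hε]

/-- For `ε > 0` let `B ε` be the unique `β > e⁻¹` with
`1 - β - (1/(2e)) (log β)² = 1 - 3/(2e) - ε`, and set `z_ε = zOf (B ε)`,
`x_ε = 𝒳(B ε)`, `v_ε = 𝒱(B ε)`, `s_ε = 𝒮(B ε)`. Then
`∂Ψ_A/∂x (x_ε, v_ε, s_ε, z_ε) = -ε⁻¹ + O(ε^{-1/2})` as `ε → 0⁺`. -/
theorem karpSipser_drift_restoring_force (B : ℝ → ℝ)
    (hB : ∀ ε : ℝ, 0 < ε →
      (Real.exp 1)⁻¹ < B ε ∧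
        1 - B ε - 1 / (2 * Real.exp 1) * (Real.log (B ε)) ^ 2
          = 1 - 3 / (2 * Real.exp 1) - ε) :
    (fun ε : ℝ =>
        deriv (fun x : ℝ => PsiA x (VFluid (B ε)) (SFluid (B ε)) (zOf (B ε)))
            (XFluid (B ε))
          + ε⁻¹)
      =O[𝓝[>] (0 : ℝ)] (fun ε : ℝ => (Real.sqrt ε)⁻¹) := by
  refine karpSipser_drift_restoring_force_general B ?_
  filter_upwards [self_mem_nhdsWithin] with ε hε
  exact (hB ε hε).imp_left (inv_pos.2 (exp_pos 1)).trans
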